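/- arXiv:2201.11082 — 7 statements merged into one kernel-verified Lean document; each statement's English description precedes it below -/
import Mathlib

section
/- For every finite simple graph G with a linear order ≤ on its vertex set V, every r ∈ ℕ, and all vertices u, v ∈ V, the set wreach_r[u] ∩ wreach_r[v] r-separates u and v in G. -/
open SimpleGraph

variable {V : Type*}

/-- `u ∈ wreach G r v` iff `u` is weakly `r`-reachable from `v`:
there is a path of length at most `r` from `v` to `u` on which `u` is the `≤`-least vertex. -/
def wreach [LinearOrder V] (G : SimpleGraph V) (r : ℕ) (v : V) : Set V :=
  {u | ∃ p : G.Walk v u, p.IsPath ∧ p.length ≤ r ∧ ∀ w ∈ p.support, u ≤ w}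

/-- `S` r-separates `u` and `v` in `G`: every path of length at most `r`
from `u` to `v` contains a vertex of `S`. -/
def Separates (G : SimpleGraph V) (r : ℕ) (S : Set V) (u v : V) : Prop :=
  ∀ p : G.Walk u v, p.IsPath → p.length ≤ r → ∃ w ∈ p.support, w ∈ S

theorem statement0 [Fintype V] [LinearOrder V] (G : SimpleGraph V) (r : ℕ) (u v : V) :
    Separates G r (wreach G r u ∩ wreach G r v) u v := by
  intro p hp hr
  obtain ⟨w, hw, hmin⟩ := p.support.toFinset.exists_min_image id ⟨u, by simp⟩
  simp only [List.mem_toFinset, id] at hw hmin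
  refine ⟨w, hw, ⟨p.takeUntil w hw, hp.takeUntil hw, (p.length_takeUntil_le hw).trans hr,
    fun x hx => hmin x (p.support_takeUntil_subset_support hw hx)⟩,
    ⟨(p.dropUntil w hw).reverse, (hp.dropUntil hw).reverse, ?_, fun x hx => ?_⟩⟩
  · rw [Walk.length_reverse]
    exact (p.length_dropUntil_le hw).trans hr
  · rw [Walk.support_reverse, List.mem_reverse] at hx
    exact hmin x (p.support_dropUntil_subset_support hw hx)
end

section
/- For every finite simple graph G with a linear order ≤ on its vertex set V, every r ∈ ℕ, every vertex u ∈ V, and all v, v' ∈ wreach_r[u]: v ≤ v' if and only if v ∈ wreach_{2r}[v']. -/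
open SimpleGraph

variable {V : Type*}

theorem statement1 [Fintype V] [LinearOrder V] (G : SimpleGraph V) (r : ℕ) (u v v' : V)
    (hv : v ∈ wreach G r u) (hv' : v' ∈ wreach G r u) :
    v ≤ v' ↔ v ∈ wreach G (2 * r) v' := by
  classical
  obtain ⟨p, hp, hpl, hpm⟩ := hv
  obtain ⟨q, hq, hql, hqm⟩ := hv'
  constructor
  · intro h
    refine ⟨(q.reverse.append p).bypass, Walk.bypass_isPath _, ?_, ?_⟩
    · refine (Walk.length_bypass_le _).trans ?_
      rw [Walk.length_append, Walk.length_reverse]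
      omega
    · intro w hw
      have hw' := Walk.support_bypass_subset _ hw
      rw [Walk.mem_support_append_iff, Walk.support_reverse, List.mem_reverse] at hw'
      rcases hw' with hw' | hw'
      · exact h.trans (hqm w hw')
      · exact hpm w hw'
  · rintro ⟨s, _, _, hs⟩
    exact hs v' s.start_mem_support
end

section
/- Let u, v ∈ V, let d := wcol_r(G, ≤), and let i be the largest index in {0, 1, …, d} such that i = 0, or max first_i(u) occurs as an entry of first_i(v), or max first_i(v) occurs as an entry of first_i(u). Then every vertex w ∈ wreach_r[u] ∩ wreach_r[v] occurs as an entry of both first_i(u) and first_i(v). -/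
open SimpleGraph

variable {V : Type*}

/-- The weak `r`-coloring number of `(G, ≤)`: the maximum of `|wreach_r[v]|` over `v`. -/
noncomputable def wcol [LinearOrder V] (G : SimpleGraph V) (r : ℕ) : ℕ :=
  sSup (Set.range fun v => (wreach G r v).ncard)

/-- `firstSeq G r i v`: the sequence consisting of the `i` smallest elements of
`wreach G r v` in increasing order, padded at the end with `v` to have length exactly `i`. -/
noncomputable def firstSeq [Fintype V] [LinearOrder V] (G : SimpleGraph V) (r i : ℕ)
    (v : V) : List V :=
  let l := ((Set.toFinite (wreach G r v)).toFinset.sort (· ≤ ·)).take i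
  l ++ List.replicate (i - l.length) v

/-- The `≤`-greatest entry of a nonempty list (junk value on the empty list). -/
noncomputable def listMax [LinearOrder V] [Nonempty V] : List V → V
  | [] => Classical.arbitrary V
  | a :: as => as.foldr max a

theorem listMax_aux [LinearOrder V] (as : List V) (a w : V) (h : ∀ x ∈ a :: as, x ≤ w)
    (hw : w ∈ a :: as) : as.foldr max a = w := by
  induction as with
  | nil => simp at hw; simp [hw]
  | cons b bs ih =>
    have hle : ∀ (cs : List V), (∀ x ∈ a :: cs, x ≤ w) → cs.foldr max a ≤ w := by
      intro cs
      induction cs with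
      | nil => intro h; simpa using h
      | cons c cs ihc =>
        intro h
        simp only [List.foldr_cons]
        exact max_le (h c (by simp)) (ihc (fun x hx => h x (by
          simp at hx ⊢; tauto)))
    have h2 : ∀ x ∈ a :: bs, x ≤ w := fun x hx => h x (by simp at hx ⊢; tauto)
    simp only [List.foldr_cons]
    by_cases hb : w = b
    · subst hb
      exact max_eq_left (hle bs h2)
    · rw [ih h2 (by simp at hw ⊢; tauto)]
      exact max_eq_right (h b (by simp))

theorem listMax_eq [LinearOrder V] [Nonempty V] (l : List V) (w : V) (h : ∀ x ∈ l, x ≤ w)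
    (hw : w ∈ l) : listMax l = w := by
  cases l with
  | nil => simp at hw
  | cons a as => exact listMax_aux as a w h hw

theorem ncard_le_wcol [Fintype V] [LinearOrder V] (G : SimpleGraph V) (r : ℕ) (v : V) :
    (wreach G r v).ncard ≤ wcol G r :=
  le_csSup (Set.finite_range _).bddAbove ⟨v, rfl⟩

/-- The rank (index) of an element of `wreach`. -/
theorem exists_rank [Fintype V] [LinearOrder V] [Nonempty V] (G : SimpleGraph V) (r : ℕ)
    (v w : V) (hw : w ∈ wreach G r v) :
    ∃ k, 0 < k ∧ k ≤ wcol G r ∧ listMax (firstSeq G r k v) = w ∧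
      ∀ j, k ≤ j → w ∈ firstSeq G r j v := by
  have hcard : ((Set.toFinite (wreach G r v)).toFinset.sort (· ≤ ·)).length ≤ wcol G r := by
    rw [Finset.length_sort, ← Set.ncard_eq_toFinset_card]
    exact ncard_le_wcol G r v
  have hmem : w ∈ (Set.toFinite (wreach G r v)).toFinset.sort (· ≤ ·) := by simpa using hw
  have hs : ((Set.toFinite (wreach G r v)).toFinset.sort (· ≤ ·)).Pairwise (· ≤ ·) :=
    Finset.pairwise_sort _ _
  unfold firstSeq
  generalize (Set.toFinite (wreach G r v)).toFinset.sort (· ≤ ·) = l at *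
  obtain ⟨k, hk, rfl⟩ := List.getElem_of_mem hmem
  have key : ∀ j, k + 1 ≤ j → l[k] ∈ l.take j := fun j hj =>
    List.mem_take_iff_getElem.2 ⟨k, by omega, rfl⟩
  refine ⟨k + 1, by omega, by omega, ?_, fun j hj => ?_⟩
  · have hz : k + 1 - (l.take (k+1)).length = 0 := by simp; omega
    simp only [hz, List.replicate_zero, List.append_nil]
    refine listMax_eq _ _ (fun x hx => ?_) (key _ le_rfl)
    obtain ⟨m, hm, rfl⟩ := List.mem_take_iff_getElem.1 hx
    rcases Nat.lt_or_ge m k with h | h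
    · exact List.pairwise_iff_getElem.1 hs m k (by omega) hk h
    · have : m = k := by omega
      subst this; exact le_rfl
  · exact List.mem_append_left _ (key j hj)

theorem statement2 [Fintype V] [LinearOrder V] [Nonempty V] (G : SimpleGraph V) (r : ℕ)
    (u v : V) (i : ℕ) (hid : i ≤ wcol G r)
    (hcond : i = 0 ∨ listMax (firstSeq G r i u) ∈ firstSeq G r i v ∨
      listMax (firstSeq G r i v) ∈ firstSeq G r i u)
    (hmax : ∀ j, j ≤ wcol G r →
      (j = 0 ∨ listMax (firstSeq G r j u) ∈ firstSeq G r j v ∨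
        listMax (firstSeq G r j v) ∈ firstSeq G r j u) → j ≤ i)
    (w : V) (hw : w ∈ wreach G r u ∩ wreach G r v) :
    w ∈ firstSeq G r i u ∧ w ∈ firstSeq G r i v := by
  obtain ⟨a, ha0, had, hamax, ha⟩ := exists_rank G r u w hw.1
  obtain ⟨b, hb0, hbd, hbmax, hb⟩ := exists_rank G r v w hw.2
  rcases le_total a b with hab | hab
  · have := hmax b hbd (Or.inr (Or.inr (hbmax ▸ ha b hab)))
    exact ⟨ha i (by omega), hb i this⟩
  · have := hmax a had (Or.inr (Or.inl (hamax ▸ hb a hab)))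
    exact ⟨ha i this, hb i (by omega)⟩
end

section
/- For every u ∈ V and every i ≥ 1, every entry of first_i(u) belongs to wreach_{2r}[max first_i(u)]. Consequently, for every v ∈ V, the number of distinct sequences of the form first_i(u), where u ranges over V and i over {1, …, wcol_r(G, ≤)}, whose ≤-greatest entry equals v is at most wcol_r(G, ≤) · 2^{wcol_{2r}(G, ≤)}. -/
open SimpleGraph

variable {V : Type*}

theorem wr_self [LinearOrder V] (G : SimpleGraph V) (r : ℕ) (u : V) : u ∈ wreach G r u :=
  ⟨Walk.nil, by simp, by simp, by simp⟩

theorem wr_le [LinearOrder V] {G : SimpleGraph V} {r : ℕ} {u w : V} (h : w ∈ wreach G r u) :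
    w ≤ u := by
  obtain ⟨p, -, -, h⟩ := h
  exact h _ p.start_mem_support

theorem wr_trans [LinearOrder V] {G : SimpleGraph V} {r : ℕ} {u v w : V}
    (hv : v ∈ wreach G r u) (hw : w ∈ wreach G r u) (hwv : w ≤ v) :
    w ∈ wreach G (2 * r) v := by
  classical
  obtain ⟨p, -, pl, hp⟩ := hv
  obtain ⟨q, -, ql, hq⟩ := hw
  refine ⟨(p.reverse.append q).bypass, Walk.bypass_isPath _, ?_, ?_⟩
  · refine (Walk.length_bypass_le _).trans ?_
    simp only [Walk.length_append, Walk.length_reverse]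
    omega
  · intro x hx
    have hx := Walk.support_bypass_subset _ hx
    rw [Walk.mem_support_append_iff] at hx
    rcases hx with hx | hx
    · exact hwv.trans (hp x (by simpa using hx))
    · exact hq x hx

theorem foldr_max_spec [LinearOrder V] (a : V) (l : List V) :
    l.foldr max a ∈ a :: l ∧ ∀ x ∈ a :: l, x ≤ l.foldr max a := by
  induction l with
  | nil => simp
  | cons b l ih =>
    obtain ⟨h1, h2⟩ := ih
    simp only [List.foldr_cons, List.mem_cons] at *
    constructor
    · rcases max_choice b (l.foldr max a) with h | h <;> rw [h] <;> tauto
    · rintro x (rfl | rfl | h)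
      · exact le_max_of_le_right (h2 _ (Or.inl rfl))
      · exact le_max_left _ _
      · exact le_max_of_le_right (h2 _ (Or.inr h))

theorem listMax_spec [LinearOrder V] [Nonempty V] (l : List V) (h : l ≠ []) :
    listMax l ∈ l ∧ ∀ x ∈ l, x ≤ listMax l := by
  cases l with
  | nil => exact absurd rfl h
  | cons a l => exact foldr_max_spec a l

theorem firstSeq_length [Fintype V] [LinearOrder V] (G : SimpleGraph V) (r i : ℕ) (u : V) :
    (firstSeq G r i u).length = i := by
  simp only [firstSeq, List.length_append, List.length_replicate, List.length_take]
  omega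

theorem mem_firstSeq [Fintype V] [LinearOrder V] {G : SimpleGraph V} {r i : ℕ} {u w : V}
    (h : w ∈ firstSeq G r i u) : w ∈ wreach G r u := by
  simp only [firstSeq, List.mem_append, List.mem_replicate] at h
  rcases h with h | ⟨-, rfl⟩
  · simpa using List.mem_of_mem_take h
  · exact wr_self G r _

theorem firstSeq_mem_wreach [Fintype V] [LinearOrder V] [Nonempty V] (G : SimpleGraph V)
    (r i : ℕ) (u : V) (hi : 1 ≤ i) (w : V) (hw : w ∈ firstSeq G r i u) :
    w ∈ wreach G (2 * r) (listMax (firstSeq G r i u)) := by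
  obtain ⟨h1, h2⟩ := listMax_spec _ (List.ne_nil_of_mem hw)
  exact wr_trans (mem_firstSeq h1) (mem_firstSeq hw) (h2 w hw)

theorem firstSeq_eq [Fintype V] [LinearOrder V] [Nonempty V] (G : SimpleGraph V)
    (r i : ℕ) (u : V) (hi : 1 ≤ i) :
    firstSeq G r i u = (firstSeq G r i u).toFinset.sort (· ≤ ·) ++
      List.replicate (i - (firstSeq G r i u).toFinset.card) (listMax (firstSeq G r i u)) := by
  have hne : firstSeq G r i u ≠ [] := by
    intro h
    have := firstSeq_length G r i u
    rw [h] at this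
    simp at this
    omega
  obtain ⟨h1, h2⟩ := listMax_spec _ hne
  set v := listMax (firstSeq G r i u) with hv
  have hvu : v ≤ u := wr_le (mem_firstSeq h1)
  set s := (Set.toFinite (wreach G r u)).toFinset with hs
  have hus : u ∈ s := by simpa [hs] using wr_self G r u
  set l := (s.sort (· ≤ ·)).take i with hl
  have hdef : firstSeq G r i u = l ++ List.replicate (i - l.length) u := rfl
  have hnd : l.Nodup := (s.sort_nodup (· ≤ ·)).sublist (List.take_sublist _ _)
  have hsorted : l.Pairwise (· ≤ ·) :=
    (s.pairwise_sort (· ≤ ·)).sublist (List.take_sublist _ _)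
  have hpad : i - l.length ≠ 0 → u ∈ l := by
    intro h
    have : l = s.sort (· ≤ ·) := by
      rw [hl, List.take_of_length_le]
      rw [hl, List.length_take] at h
      omega
    rw [this]
    simpa using hus
  have hfin : (firstSeq G r i u).toFinset = l.toFinset := by
    ext x
    rw [hdef]
    simp only [List.mem_toFinset, List.mem_append, List.mem_replicate]
    constructor
    · rintro (h | ⟨h, rfl⟩)
      · exact h
      · exact hpad h
    · exact Or.inl
  have hsort : l.toFinset.sort (· ≤ ·) = l := (List.toFinset_sort (· ≤ ·) hnd).2 hsorted
  rw [hfin, hsort, List.toFinset_card_of_nodup hnd, hdef]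
  congr 1
  by_cases h0 : i - l.length = 0
  · simp [h0]
  · have : u ≤ v := h2 u (by rw [hdef]; exact List.mem_append_left _ (hpad h0))
    rw [le_antisymm this hvu]

theorem statement3 [Fintype V] [LinearOrder V] [Nonempty V] (G : SimpleGraph V) (r : ℕ) :
    (∀ u : V, ∀ i : ℕ, 1 ≤ i → ∀ w ∈ firstSeq G r i u,
      w ∈ wreach G (2 * r) (listMax (firstSeq G r i u))) ∧
    (∀ v : V,
      {l : List V | ∃ u : V, ∃ i : ℕ, 1 ≤ i ∧ i ≤ wcol G r ∧
        l = firstSeq G r i u ∧ listMax l = v}.ncard ≤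
      wcol G r * 2 ^ wcol G (2 * r)) := by
  refine ⟨fun u i hi w hw => firstSeq_mem_wreach G r i u hi w hw, fun v => ?_⟩
  classical
  set R := (Set.toFinite (wreach G (2 * r) v)).toFinset with hR
  let f : ℕ × Finset V → List V := fun p =>
    p.2.sort (· ≤ ·) ++ List.replicate (p.1 - p.2.card) v
  have hsub : {l : List V | ∃ u : V, ∃ i : ℕ, 1 ≤ i ∧ i ≤ wcol G r ∧
        l = firstSeq G r i u ∧ listMax l = v} ⊆
      (((Finset.Icc 1 (wcol G r)) ×ˢ R.powerset).image f : Finset (List V)) := by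
    rintro l ⟨u, i, hi, hi', rfl, hm⟩
    rw [Finset.mem_coe, Finset.mem_image]
    refine ⟨(i, (firstSeq G r i u).toFinset), ?_, ?_⟩
    · simp only [Finset.mem_product, Finset.mem_Icc, Finset.mem_powerset]
      refine ⟨⟨hi, hi'⟩, fun w hw => ?_⟩
      have := firstSeq_mem_wreach G r i u hi w (by simpa using hw)
      rw [hm] at this
      simpa [hR] using this
    · have := firstSeq_eq G r i u hi
      rw [hm] at this
      exact this.symm
  have hcard : R.card ≤ wcol G (2 * r) := by
    rw [hR, ← Set.ncard_eq_toFinset_card]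
    exact le_csSup (Set.finite_range _).bddAbove ⟨v, rfl⟩
  refine (Set.ncard_le_ncard hsub (Finset.finite_toSet _)).trans ?_
  rw [Set.ncard_coe_finset]
  refine Finset.card_image_le.trans ?_
  rw [Finset.card_product, Finset.card_powerset, Nat.card_Icc, Nat.add_sub_cancel]
  exact Nat.mul_le_mul_left _ (Nat.pow_le_pow_right (by norm_num) hcard)
end

section
/- Under the construction hypotheses, the following hold: (a) m_k ∈ wreach_r[v] with respect to (G, ≤) for every 1 ≤ k ≤ ℓ; (b) |S^ℓ| ≤ 2rℓ²; (c) for every vertex u ∈ V and every 1 ≤ k ≤ ℓ, if S^{k−1} does not r-separate u and v in G, then m_j ∈ wreach_{2r}[u] with respect to (G, ≤) for all 1 ≤ j ≤ k. -/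
open SimpleGraph

variable {V : Type*}

/-- `Sk G m π k = S^k`: the union of the vertex sets of the paths `π i j` for
`1 ≤ i ≤ j ≤ k`. -/
def Sk (G : SimpleGraph V) (m : ℕ → V) (π : ∀ i j : ℕ, G.Walk (m i) (m j)) (k : ℕ) :
    Set V :=
  {w | ∃ i j : ℕ, 1 ≤ i ∧ i ≤ j ∧ j ≤ k ∧ w ∈ (π i j).support}

theorem statement7 [Fintype V] [LinearOrder V] (G : SimpleGraph V) (r : ℕ) (hr : 1 ≤ r)
    (v : V) (ℓ : ℕ) (m : ℕ → V) (π : ∀ i j : ℕ, G.Walk (m i) (m j))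
    -- each `π i j` (for `1 ≤ i ≤ j ≤ ℓ`) is a path of length at most `2r`
    (hπ : ∀ i j : ℕ, 1 ≤ i → i ≤ j → j ≤ ℓ → (π i j).IsPath ∧ (π i j).length ≤ 2 * r)
    -- (i) `v` is a vertex of `G_k`, i.e. `v ∉ S^{k-1}`
    (hv : ∀ k : ℕ, 1 ≤ k → k ≤ ℓ → v ∉ Sk G m π (k - 1))
    -- (ii) `m k` is a vertex of `G_k` at distance at most `r` from `v` in `G_k`, and it is
    -- `≤`-minimal among all vertices of `G_k` at distance at most `r` from `v` in `G_k`
    (hm : ∀ k : ℕ, 1 ≤ k → k ≤ ℓ →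
      (∃ p : G.Walk v (m k), p.IsPath ∧ p.length ≤ r ∧
        ∀ w ∈ p.support, w ∉ Sk G m π (k - 1)) ∧
      (∀ w : V, (∃ p : G.Walk v w, p.IsPath ∧ p.length ≤ r ∧
        ∀ x ∈ p.support, x ∉ Sk G m π (k - 1)) → m k ≤ w))
    -- (iii) all vertices of `π i k` lie in `G_i`
    (hπk : ∀ i k : ℕ, 1 ≤ i → i ≤ k → k ≤ ℓ →
      ∀ w ∈ (π i k).support, w ∉ Sk G m π (i - 1)) :
    -- (a)
    (∀ k : ℕ, 1 ≤ k → k ≤ ℓ → m k ∈ wreach G r v) ∧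
    -- (b)
    (Sk G m π ℓ).ncard ≤ 2 * r * ℓ ^ 2 ∧
    -- (c)
    (∀ u : V, ∀ k : ℕ, 1 ≤ k → k ≤ ℓ → ¬ Separates G r (Sk G m π (k - 1)) u v →
      ∀ j : ℕ, 1 ≤ j → j ≤ k → m j ∈ wreach G (2 * r) u) := by
  classical
  have key : ∀ k, 1 ≤ k → k ≤ ℓ → ∀ x, ∀ p : G.Walk v x, p.length ≤ r →
      (∀ y ∈ p.support, y ∉ Sk G m π (k - 1)) → ∀ w ∈ p.support, m k ≤ w := by
    intro k h1 h2 x p hp hS w hw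
    refine (hm k h1 h2).2 w ⟨(p.takeUntil w hw).bypass, Walk.bypass_isPath _, ?_, ?_⟩
    · exact ((Walk.length_bypass_le _).trans (p.length_takeUntil_le hw)).trans hp
    · intro y hy
      exact hS y (p.support_takeUntil_subset hw (Walk.support_bypass_subset _ hy))
  refine ⟨?_, ?_, ?_⟩
  · intro k h1 h2
    obtain ⟨p, hp, hl, hS⟩ := (hm k h1 h2).1
    exact ⟨p, hp, hl, key k h1 h2 _ p hl hS⟩
  · let T : ℕ × ℕ → Finset V := fun a =>
      if a.1 = a.2 then {m a.1} else
        if a.1 ≤ a.2 then (π a.1 a.2).support.tail.toFinset else ∅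
    have hsub : Sk G m π ℓ ⊆
        (((Finset.Icc 1 ℓ ×ˢ Finset.Icc 1 ℓ).biUnion T : Finset V) : Set V) := by
      rintro w ⟨i, j, hi, hij, hj, hw⟩
      simp only [Finset.mem_coe, Finset.mem_biUnion, Finset.mem_product, Finset.mem_Icc]
      by_cases hwi : w = m i
      · exact ⟨(i, i), by simp; omega, by simp [T, hwi]⟩
      · have hne : i ≠ j := by
          rintro rfl
          have h := (hπ i i hi le_rfl hj).1
          rw [Walk.isPath_iff_eq_nil] at h
          rw [h] at hw
          simp at hw
          exact hwi hw
        refine ⟨(i, j), by simp; omega, ?_⟩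
        rw [Walk.support_eq_cons] at hw
        simp only [List.mem_cons, hwi, false_or] at hw
        simp [T, hne, hij, hw]
    have hcard : ((Finset.Icc 1 ℓ ×ˢ Finset.Icc 1 ℓ).biUnion T).card
        ≤ (Finset.Icc 1 ℓ ×ˢ Finset.Icc 1 ℓ).card * (2 * r) := by
      apply Finset.card_biUnion_le_card_mul
      rintro ⟨i, j⟩ hij
      simp only [Finset.mem_product, Finset.mem_Icc] at hij
      simp only [T]
      split_ifs with h1 h2
      · simp; omega
      · refine (List.toFinset_card_le _).trans ?_
        have := (hπ i j hij.1.1 h2 hij.2.2).2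
        simpa using this
      · simp
    have h := (Set.ncard_le_ncard hsub (Finset.finite_toSet _))
    rw [Set.ncard_coe_finset] at h
    refine (h.trans hcard).trans (le_of_eq ?_)
    simp
    ring
  · intro u k h1 h2 hns j hj1 hjk
    unfold Separates at hns
    push Not at hns
    obtain ⟨p, hp, hl, hS⟩ := hns
    obtain ⟨q, hq, hql, hqS⟩ := (hm j hj1 (hjk.trans h2)).1
    refine ⟨(p.append q).bypass, Walk.bypass_isPath _, ?_, ?_⟩
    · refine (Walk.length_bypass_le _).trans ?_
      rw [Walk.length_append]
      omega
    · intro w hw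
      have hw := Walk.support_bypass_subset _ hw
      rw [Walk.mem_support_append_iff] at hw
      rcases hw with hw | hw
      · refine key j hj1 (hjk.trans h2) _ p.reverse (by simpa using hl) ?_ w (by simpa using hw)
        rintro y hy ⟨a, b, ha, hab, hb, hy2⟩
        exact hS y (by simpa using hy) ⟨a, b, ha, hab, by omega, hy2⟩
      · exact key j hj1 (hjk.trans h2) _ q hql hqS w hw
end

section
/- Assume additionally that N, s ∈ ℕ with s ≥ 1 are such that for every set A ⊆ V with |A| ≥ N there exist a set S ⊆ V with |S| < s and a set I ⊆ A ∖ S with |I| ≥ 2s such that any two distinct vertices of I are at distance greater than 2r in the graph G − S. Then ℓ < N. -/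
open SimpleGraph

variable {V : Type*}

theorem statement8 [Fintype V] [LinearOrder V] (G : SimpleGraph V) (r : ℕ) (hr : 1 ≤ r)
    (v : V) (ℓ : ℕ) (m : ℕ → V) (π : ∀ i j : ℕ, G.Walk (m i) (m j))
    (hπ : ∀ i j : ℕ, 1 ≤ i → i ≤ j → j ≤ ℓ → (π i j).IsPath ∧ (π i j).length ≤ 2 * r)
    (hv : ∀ k : ℕ, 1 ≤ k → k ≤ ℓ → v ∉ Sk G m π (k - 1))
    (hm : ∀ k : ℕ, 1 ≤ k → k ≤ ℓ →
      (∃ p : G.Walk v (m k), p.IsPath ∧ p.length ≤ r ∧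
        ∀ w ∈ p.support, w ∉ Sk G m π (k - 1)) ∧
      (∀ w : V, (∃ p : G.Walk v w, p.IsPath ∧ p.length ≤ r ∧
        ∀ x ∈ p.support, x ∉ Sk G m π (k - 1)) → m k ≤ w))
    (hπk : ∀ i k : ℕ, 1 ≤ i → i ≤ k → k ≤ ℓ →
      ∀ w ∈ (π i k).support, w ∉ Sk G m π (i - 1))
    -- the additional uniform quasi-wideness assumption
    (N s : ℕ) (hs : 1 ≤ s)
    (hN : ∀ A : Set V, N ≤ A.ncard →
      ∃ S : Set V, S.ncard < s ∧ ∃ I : Set V, I ⊆ A \ S ∧ 2 * s ≤ I.ncard ∧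
        ∀ u ∈ I, ∀ w ∈ I, u ≠ w →
          ∀ p : G.Walk u w, p.length ≤ 2 * r → ∃ x ∈ p.support, x ∈ S) :
    ℓ < N := by
  classical
  by_contra hlt
  push Not at hlt
  have hinj : ∀ i k : ℕ, 1 ≤ i → i < k → k ≤ ℓ → m i ≠ m k := by
    intro i k hi hik hk heq
    obtain ⟨p, -, -, hp⟩ := (hm k (by omega) hk).1
    apply hp (m k) p.end_mem_support
    exact ⟨i, i, hi, le_rfl, by omega, heq ▸ (π i i).start_mem_support⟩
  have hinjOn : Set.InjOn m (Finset.Icc 1 ℓ : Finset ℕ) := by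
    intro i hi k hk heq
    simp only [Finset.coe_Icc, Set.mem_Icc] at hi hk
    rcases lt_trichotomy i k with h | h | h
    · exact absurd heq (hinj i k hi.1 h hk.2)
    · exact h
    · exact absurd heq.symm (hinj k i hk.1 h hi.2)
  obtain ⟨S, hS, I, hIA, hI, hsep⟩ := hN (m '' (Finset.Icc 1 ℓ : Finset ℕ)) (by
    rw [Set.ncard_image_of_injOn hinjOn, Set.ncard_coe_finset]
    simpa using hlt)
  let J : Finset ℕ := (Finset.Icc 1 ℓ).filter (fun i => m i ∈ I)
  have hJ : 2 * s ≤ J.card := by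
    have hsub : I ⊆ m '' (J : Set ℕ) := by
      intro x hx
      obtain ⟨i, hi, rfl⟩ := (hIA hx).1
      exact ⟨i, by simpa [J] using ⟨by simpa using hi, hx⟩, rfl⟩
    calc 2 * s ≤ I.ncard := hI
      _ ≤ (m '' (J : Set ℕ)).ncard := Set.ncard_le_ncard hsub (Set.toFinite _)
      _ ≤ (J : Set ℕ).ncard := Set.ncard_image_le (Set.toFinite _)
      _ = J.card := Set.ncard_coe_finset J
  let e := J.orderEmbOfFin rfl
  have he : ∀ a, 1 ≤ e a ∧ e a ≤ ℓ ∧ m (e a) ∈ I := by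
    intro a
    have := J.orderEmbOfFin_mem rfl a
    simp only [J, Finset.mem_filter, Finset.mem_Icc] at this
    exact ⟨this.1.1, this.1.2, this.2⟩
  have hlt' : ∀ a b : Fin J.card, a.1 < b.1 → e a < e b := fun a b h => e.strictMono h
  let a : Fin s → Fin J.card := fun t => ⟨2 * t.1, by omega⟩
  let b : Fin s → Fin J.card := fun t => ⟨2 * t.1 + 1, by omega⟩
  have hab : ∀ t, e (a t) < e (b t) := fun t => hlt' _ _ (by simp [a, b])
  have hx : ∀ t : Fin s, ∃ x ∈ (π (e (a t)) (e (b t))).support, x ∈ S := by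
    intro t
    exact hsep _ (he _).2.2 _ (he _).2.2 (hinj _ _ (he _).1 (hab t) (he _).2.1) _
      (hπ _ _ (he _).1 (hab t).le (he _).2.1).2
  choose f hf hfS using hx
  have hne : ∀ t u : Fin s, t.1 < u.1 → f t ≠ f u := by
    intro t u htu heq
    have hba : e (b t) < e (a u) := hlt' _ _ (by simp only [a, b]; omega)
    apply hπk _ _ (he (a u)).1 (hab u).le (he (b u)).2.1 (f u) (hf u)
    exact ⟨e (a t), e (b t), (he _).1, (hab t).le, by omega, heq ▸ hf t⟩
  have hfi : Function.Injective f := by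
    intro t u heq
    rcases lt_trichotomy t.1 u.1 with h | h | h
    · exact absurd heq (hne t u h)
    · exact Fin.ext h
    · exact absurd heq.symm (hne u t h)
  have h1 : (Set.range f).ncard ≤ S.ncard :=
    Set.ncard_le_ncard (by rintro _ ⟨t, rfl⟩; exact hfS t) (Set.toFinite _)
  rw [← Set.image_univ, Set.ncard_image_of_injective _ hfi, Set.ncard_univ, Nat.card_eq_fintype_card, Fintype.card_fin] at h1
  omega
end

section
/- Under the construction hypotheses, for every 1 ≤ k ≤ ℓ it holds that {m_1, …, m_k} ⊆ wreach_{2r}[m*] with respect to (G, ≤), where m* denotes the ≤-greatest element of {m_1, …, m_k}. -/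
open SimpleGraph

variable {V : Type*}

theorem statement9 [Fintype V] [LinearOrder V] (G : SimpleGraph V) (r : ℕ) (hr : 1 ≤ r)
    (v : V) (ℓ : ℕ) (m : ℕ → V) (π : ∀ i j : ℕ, G.Walk (m i) (m j))
    (hπ : ∀ i j : ℕ, 1 ≤ i → i ≤ j → j ≤ ℓ → (π i j).IsPath ∧ (π i j).length ≤ 2 * r)
    (hv : ∀ k : ℕ, 1 ≤ k → k ≤ ℓ → v ∉ Sk G m π (k - 1))
    (hm : ∀ k : ℕ, 1 ≤ k → k ≤ ℓ →
      (∃ p : G.Walk v (m k), p.IsPath ∧ p.length ≤ r ∧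
        ∀ w ∈ p.support, w ∉ Sk G m π (k - 1)) ∧
      (∀ w : V, (∃ p : G.Walk v w, p.IsPath ∧ p.length ≤ r ∧
        ∀ x ∈ p.support, x ∉ Sk G m π (k - 1)) → m k ≤ w))
    (hπk : ∀ i k : ℕ, 1 ≤ i → i ≤ k → k ≤ ℓ →
      ∀ w ∈ (π i k).support, w ∉ Sk G m π (i - 1))
    (k : ℕ) (hk1 : 1 ≤ k) (hkℓ : k ≤ ℓ)
    -- `mstar` is the `≤`-greatest element of `{m 1, …, m k}`
    (mstar : V) (hmem : ∃ j : ℕ, 1 ≤ j ∧ j ≤ k ∧ mstar = m j)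
    (hub : ∀ j : ℕ, 1 ≤ j → j ≤ k → m j ≤ mstar) :
    ∀ j : ℕ, 1 ≤ j → j ≤ k → m j ∈ wreach G (2 * r) mstar := by
  classical
  intro j hj1 hjk
  have mono : ∀ w, w ∉ Sk G m π (k - 1) → w ∉ Sk G m π (j - 1) := by
    rintro w hw ⟨a, b, h1, h2, h3, h4⟩
    exact hw ⟨a, b, h1, h2, by omega, h4⟩
  have hjℓ : j ≤ ℓ := hjk.trans hkℓ
  have key : ∀ (x : V) (p : G.Walk v x), p.IsPath → p.length ≤ r →
      (∀ w ∈ p.support, w ∉ Sk G m π (j - 1)) → ∀ w ∈ p.support, m j ≤ w := by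
    intro x p hp hl hs w hw
    refine (hm j hj1 hjℓ).2 w ⟨p.takeUntil w hw, hp.takeUntil hw,
      (p.length_takeUntil_le hw).trans hl, fun y hy => hs y (p.support_takeUntil_subset_support hw hy)⟩
  -- the greatest element is the last one
  have hstar : mstar = m k := by
    apply le_antisymm
    · obtain ⟨i, hi1, hik, rfl⟩ := hmem
      obtain ⟨p, hp, hl, hs⟩ := (hm k hk1 hkℓ).1
      refine (hm i hi1 (hik.trans hkℓ)).2 _ ⟨p, hp, hl, ?_⟩
      rintro w hw ⟨a, b, h1, h2, h3, h4⟩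
      exact hs w hw ⟨a, b, h1, h2, by omega, h4⟩
    · exact hub k hk1 le_rfl
  subst hstar
  obtain ⟨p, hp, hpl, hps⟩ := (hm k hk1 hkℓ).1
  obtain ⟨q, hq, hql, hqs⟩ := (hm j hj1 hjℓ).1
  refine ⟨(p.reverse.append q).bypass, Walk.bypass_isPath _, ?_, ?_⟩
  · refine (Walk.length_bypass_le _).trans ?_
    rw [Walk.length_append, Walk.length_reverse]
    omega
  · intro w hw
    have hw' := Walk.support_bypass_subset_support _ hw
    rw [Walk.mem_support_append_iff, Walk.support_reverse, List.mem_reverse] at hw'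
    rcases hw' with h | h
    · exact key _ p hp hpl (fun w hw => mono w (hps w hw)) w h
    · exact key _ q hq hql hqs w h
end
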